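/- arXiv:1810.12871 — 5 statements merged into one kernel-verified Lean document; each statement's English description precedes it below -/
import Mathlib

section
/- Let p be a prime with p ≡ 3 (mod 4), and define a ∈ {0,1}^p by a_i = 1 if i is a nonzero quadratic residue modulo p and a_i = 0 otherwise. Then for every j with 1 ≤ j ≤ p−1, |â_j|² = (p+1)/4. (In particular, a is a spectrally flat binary sequence of transmissivity (p−1)/(2p).) -/
/-- Discrete Fourier transform of a real vector `a ∈ ℝ^n`:
`â_j = ∑_{i=0}^{n-1} a_i e^{-2πi·ij/n}`. -/
noncomputable def dft {n : ℕ} (a : Fin n → ℝ) (j : Fin n) : ℂ :=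
  ∑ i : Fin n, (a i : ℂ) *
    Complex.exp (-(2 * Real.pi * Complex.I * ((i : ℕ) : ℂ) * ((j : ℕ) : ℂ)) / (n : ℂ))

/-- Transmissivity `ρ(a) = (1/n) ∑ i, a i`. -/
noncomputable def transmissivity {n : ℕ} (a : Fin n → ℝ) : ℝ :=
  (1 / (n : ℝ)) * ∑ i : Fin n, a i

/-- LMMSE `m(n,t,W,J,d,a) = ∑_i 1/(1/d_i + γ|â_i|²)` with
`γ = t/(n(W+Jρ(a)))`. -/
noncomputable def lmmse (n : ℕ) (t W J : ℝ) (d : Fin n → ℝ) (a : Fin n → ℝ) : ℝ :=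
  ∑ i : Fin n,
    1 / (1 / d i + (t / (n * (W + J * transmissivity a))) * ‖dft a i‖ ^ 2)

/-- Optimal LMMSE `m*(n,t,W,J,d)`: infimum of the LMMSE over apertures `a ∈ [0,1]^n`. -/
noncomputable def lmmseOpt (n : ℕ) (t W J : ℝ) (d : Fin n → ℝ) : ℝ :=
  sInf {m | ∃ a : Fin n → ℝ, (∀ i, a i ∈ Set.Icc (0 : ℝ) 1) ∧ m = lmmse n t W J d a}

/-!
Over a finite field with `q` elements, twice the indicator of the nonzero squares is `1 + χ`
away from `0`, where `χ` is the quadratic character. Pairing with a nontrivial additive character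
`ψ` kills the constant `1`, so the character sum over the nonzero squares is `(G - 1) / 2` with `G`
the quadratic Gauss sum. If `q ≡ 3 (mod 4)`, then `-1` is not a square and `G ^ 2 = -q`; hence `G`
is purely imaginary and `‖G - 1‖ ^ 2 = q + 1`.
-/

lemma norm_sub_ofReal_sq_of_sq_eq_neg {z : ℂ} {r : ℝ} (hr : 0 ≤ r) (hz : z ^ 2 = -(r : ℂ))
    (x : ℝ) : ‖z - x‖ ^ 2 = r + x ^ 2 := by
  have norm_sq : z.re ^ 2 + z.im ^ 2 = r := by
    rw [← Complex.sq_norm_sub_sq_re, add_sub_cancel, ← norm_pow, hz, norm_neg,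
      Complex.norm_of_nonneg hr]
  have re_sq : z.re ^ 2 - z.im ^ 2 = -r := by
    simpa [sq] using congrArg Complex.re hz
  have re_eq_zero : z.re = 0 := pow_eq_zero_iff two_ne_zero |>.1 (by linarith)
  rw [Complex.sq_norm, Complex.normSq_apply]
  simp only [Complex.sub_re, Complex.sub_im, Complex.ofReal_re, Complex.ofReal_im, re_eq_zero]
  linarith

section NonzeroSquares

variable (F : Type*) [Field F] [Fintype F] [DecidableEq F]

/-- The nonzero squares of a finite field; for `F = ZMod p` these are the quadratic residues
modulo `p`. -/
def nonzeroSquares : Finset F := {x | x ≠ 0 ∧ IsSquare x}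

variable {F}

lemma mem_nonzeroSquares {x : F} : x ∈ nonzeroSquares F ↔ x ≠ 0 ∧ IsSquare x := by
  simp [nonzeroSquares]

lemma two_mul_indicator_nonzeroSquares (x : F) :
    2 * (if x ∈ nonzeroSquares F then 1 else 0 : ℤ) =
      1 + quadraticChar F x - if x = 0 then 1 else 0 := by
  rcases eq_or_ne x 0 with rfl | hx
  · simp [mem_nonzeroSquares]
  by_cases hsq : IsSquare x
  · simp [mem_nonzeroSquares, hx, hsq, (quadraticChar_one_iff_isSquare hx).2 hsq]
  · simp [mem_nonzeroSquares, hx, hsq, quadraticChar_neg_one_iff_not_isSquare.2 hsq]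

lemma two_mul_sum_nonzeroSquares {R : Type*} [Ring R] (f : F → R) :
    2 * ∑ x ∈ nonzeroSquares F, f x = ∑ x, f x + ∑ x, (quadraticChar F x : R) * f x - f 0 := by
  have pointwise (x : F) : 2 * (if x ∈ nonzeroSquares F then f x else 0) =
      f x + (quadraticChar F x : R) * f x - if x = 0 then f x else 0 := by
    have h := congrArg (fun m : ℤ ↦ (m : R) * f x) (two_mul_indicator_nonzeroSquares x)
    simpa [mul_assoc, add_mul, sub_mul] using h
  calc 2 * ∑ x ∈ nonzeroSquares F, f x
      = ∑ x, 2 * (if x ∈ nonzeroSquares F then f x else 0) := by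
        rw [← Finset.mul_sum, Finset.sum_ite_mem, Finset.univ_inter]
    _ = ∑ x, f x + ∑ x, (quadraticChar F x : R) * f x - f 0 := by
        simp [pointwise, Finset.sum_add_distrib]

lemma two_mul_card_nonzeroSquares (hF : ringChar F ≠ 2) :
    2 * ((nonzeroSquares F).card : ℤ) = Fintype.card F - 1 := by
  have h := two_mul_sum_nonzeroSquares (F := F) fun _ ↦ (1 : ℤ)
  simp only [Int.cast_id, mul_one, quadraticChar_sum_zero hF] at h
  simpa using h

end NonzeroSquares

section GaussSum

variable {F : Type*} [Field F] [Fintype F]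

lemma ringChar_ne_two_of_card_mod_four_eq_three (hq : Fintype.card F % 4 = 3) :
    ringChar F ≠ 2 := fun h ↦ by
  have := FiniteField.even_card_of_char_two h
  omega

variable [DecidableEq F]

variable (F) in
/-- The quadratic character of a finite field, with values in `ℂ` rather than `ℤ` so that it can be
paired with complex additive characters in a Gauss sum. -/
noncomputable def complexQuadraticChar : MulChar F ℂ :=
  (quadraticChar F).ringHomComp (Int.castRingHom ℂ)

lemma complexQuadraticChar_apply (x : F) : complexQuadraticChar F x = quadraticChar F x := rfl

lemma two_mul_sum_addChar_nonzeroSquares {ψ : AddChar F ℂ} (hψ : ψ ≠ 1) :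
    2 * ∑ x ∈ nonzeroSquares F, ψ x = gaussSum (complexQuadraticChar F) ψ - 1 := by
  rw [two_mul_sum_nonzeroSquares, AddChar.sum_eq_zero_of_ne_one hψ, zero_add,
    AddChar.map_zero_eq_one]
  rfl

lemma gaussSum_complexQuadraticChar_sq_eq_neg_card (hq : Fintype.card F % 4 = 3) {ψ : AddChar F ℂ}
    (hψ : ψ ≠ 1) : gaussSum (complexQuadraticChar F) ψ ^ 2 = -(Fintype.card F : ℂ) := by
  have nontrivial : complexQuadraticChar F ≠ 1 :=
    (MulChar.ringHomComp_ne_one_iff (Int.castRingHom ℂ).injective_int).2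
      (quadraticChar_ne_one (ringChar_ne_two_of_card_mod_four_eq_three hq))
  have not_isSquare_neg_one : ¬ IsSquare (-1 : F) := by
    simpa [FiniteField.isSquare_neg_one_iff] using hq
  rw [gaussSum_sq nontrivial ((quadraticChar_isQuadratic F).comp _) (.of_ne_one hψ),
    complexQuadraticChar_apply, quadraticChar_neg_one_iff_not_isSquare.2 not_isSquare_neg_one]
  simp

lemma norm_sum_addChar_nonzeroSquares_sq (hq : Fintype.card F % 4 = 3) {ψ : AddChar F ℂ}
    (hψ : ψ ≠ 1) :
    ‖∑ x ∈ nonzeroSquares F, ψ x‖ ^ 2 = ((Fintype.card F : ℝ) + 1) / 4 := by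
  have norm_gaussSum_sub_one :
      ‖gaussSum (complexQuadraticChar F) ψ - 1‖ ^ 2 = (Fintype.card F : ℝ) + 1 := by
    simpa using norm_sub_ofReal_sq_of_sq_eq_neg (Nat.cast_nonneg (Fintype.card F))
      (by simpa using gaussSum_complexQuadraticChar_sq_eq_neg_card hq hψ) 1
  rw [← two_mul_sum_addChar_nonzeroSquares hψ, norm_mul, mul_pow, Complex.norm_ofNat]
    at norm_gaussSum_sub_one
  linarith

theorem quadratic_residue_spectrally_flat_general (hq : Fintype.card F % 4 = 3) :
    (∀ ψ : AddChar F ℂ, ψ ≠ 1 →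
        ‖∑ x ∈ nonzeroSquares F, ψ x‖ ^ 2 = ((Fintype.card F : ℝ) + 1) / 4) ∧
      ((nonzeroSquares F).card : ℝ) / Fintype.card F =
        ((Fintype.card F : ℝ) - 1) / (2 * Fintype.card F) := by
  refine ⟨fun ψ hψ ↦ norm_sum_addChar_nonzeroSquares_sq hq hψ, ?_⟩
  have card_eq : 2 * ((nonzeroSquares F).card : ℝ) = Fintype.card F - 1 := mod_cast
    two_mul_card_nonzeroSquares (ringChar_ne_two_of_card_mod_four_eq_three hq)
  rw [← card_eq, mul_div_mul_left _ _ two_ne_zero]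

end GaussSum

section ZMod

variable {n : ℕ}

lemma zmod_natCast_fin_eq_zero_iff (i : Fin n) : ((i : ℕ) : ZMod n) = 0 ↔ (i : ℕ) = 0 := by
  rw [ZMod.natCast_eq_zero_iff, Nat.dvd_iff_mod_eq_zero, Nat.mod_eq_of_lt i.isLt]

variable [NeZero n]

lemma sum_fin_natCast_zmod {M : Type*} [AddCommMonoid M] (f : ZMod n → M) :
    ∑ i : Fin n, f (i : ℕ) = ∑ x, f x :=
  Fintype.sum_equiv
    ⟨fun i : Fin n ↦ ((i : ℕ) : ZMod n), fun x ↦ ⟨x.val, x.val_lt⟩,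
      fun i ↦ Fin.ext (ZMod.val_natCast_of_lt i.isLt), ZMod.natCast_zmod_val⟩
    _ _ fun _ ↦ rfl

lemma isSquare_zmod_iff_exists_natCast_sq {x : ZMod n} :
    IsSquare x ↔ ∃ k : ℕ, x = (k : ZMod n) ^ 2 := by
  rw [isSquare_iff_exists_sq, ZMod.natCast_zmod_surjective.exists]

lemma mulShift_stdAddChar_neg_natCast (i j : ℕ) :
    ZMod.stdAddChar.mulShift (-(j : ZMod n)) (i : ZMod n) =
      Complex.exp (-(2 * Real.pi * Complex.I * (i : ℂ) * (j : ℂ)) / (n : ℂ)) := by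
  have h := ZMod.stdAddChar_coe (N := n) (-(j : ℤ) * i)
  push_cast at h
  rw [AddChar.mulShift_apply, h]
  ring_nf

lemma dft_indicator (S : Finset (ZMod n)) (j : Fin n) :
    dft (fun i : Fin n ↦ if ((i : ℕ) : ZMod n) ∈ S then 1 else 0) j =
      ∑ x ∈ S, ZMod.stdAddChar.mulShift (-((j : ℕ) : ZMod n)) x := by
  simp only [dft, ← mulShift_stdAddChar_neg_natCast]
  rw [sum_fin_natCast_zmod fun x ↦ ((if x ∈ S then 1 else 0 : ℝ) : ℂ) *
    ZMod.stdAddChar.mulShift (-((j : ℕ) : ZMod n)) x]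
  simp [apply_ite Complex.ofReal]

lemma transmissivity_indicator (S : Finset (ZMod n)) :
    transmissivity (fun i : Fin n ↦ if ((i : ℕ) : ZMod n) ∈ S then 1 else 0) =
      (S.card : ℝ) / n := by
  rw [transmissivity, sum_fin_natCast_zmod fun x ↦ (if x ∈ S then 1 else 0 : ℝ)]
  simp [div_eq_inv_mul]

end ZMod

open Classical in
/-- For a prime `p ≡ 3 (mod 4)`, the quadratic-residue indicator sequence is
spectrally flat: `|â_j|² = (p+1)/4` for all nonzero frequencies `j`, and its
transmissivity is `(p-1)/(2p)`. -/
theorem quadratic_residue_spectrally_flat (p : ℕ) (hp : p.Prime) (hp4 : p % 4 = 3)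
    (a : Fin p → ℝ)
    (ha : ∀ i : Fin p,
      a i = if (i : ℕ) ≠ 0 ∧ ∃ k : ℕ, ((i : ℕ) : ZMod p) = (k : ZMod p) ^ 2 then 1 else 0) :
    (∀ j : Fin p, (j : ℕ) ≠ 0 → ‖dft a j‖ ^ 2 = ((p : ℝ) + 1) / 4) ∧
      transmissivity a = ((p : ℝ) - 1) / (2 * p) := by
  have : Fact p.Prime := ⟨hp⟩
  obtain rfl : a = fun i : Fin p ↦
      if ((i : ℕ) : ZMod p) ∈ nonzeroSquares (ZMod p) then 1 else 0 := by
    funext i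
    simp only [ha, mem_nonzeroSquares, isSquare_zmod_iff_exists_natCast_sq, ne_eq,
      zmod_natCast_fin_eq_zero_iff]
  have flat := quadratic_residue_spectrally_flat_general (F := ZMod p) (by rwa [ZMod.card])
  rw [ZMod.card] at flat
  refine ⟨fun j hj ↦ ?_, (transmissivity_indicator _).trans flat.2⟩
  have shift_ne_zero : -((j : ℕ) : ZMod p) ≠ 0 :=
    neg_ne_zero.2 ((zmod_natCast_fin_eq_zero_iff j).not.2 hj)
  rw [dft_indicator, flat.1 _ (ZMod.isPrimitive_stdAddChar p shift_ne_zero)]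
end

section
/- For every a > 0, sup_{x ∈ [0,1]} f_a(x) ≤ 2·f_a(1/2), where f_a(x) = x(1−x)/(a+x). Moreover the constant 2 is sharp: sup_{a>0} (sup_{x∈[0,1]} f_a(x))/f_a(1/2) = 2, approached as a → 0. -/
/-- `f_a(x) = x(1-x)/(a+x)`: the usable-power-to-noise tradeoff of a
transmissivity-`x` aperture at thermal-to-shot noise ratio `a = W/J`. -/
noncomputable def fPow (a x : ℝ) : ℝ := x * (1 - x) / (a + x)

/-!
The bound holds because `2 f_a(1/2) - f_a(x)` has the manifestly nonnegative numerator
`a((1-x)² + x²) + x²` over the denominator `(2a+1)(a+x)`. For sharpness, `f_a` is maximal at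
`x = √(a² + a) - a`, which is asymptotic to `√a` as `a → 0`; testing at `a = t²`, `x = t` gives
`f_a(x) = (1-t)/(1+t) → 1`, whereas `f_a(1/2) → 1/2`.
-/

open Filter Topology

theorem fPow_half (a : ℝ) : fPow a (1 / 2) = 1 / (4 * a + 2) := by
  rw [fPow, show a + 1 / 2 = (4 * a + 2) / 4 by ring, div_div_eq_mul_div]
  norm_num

theorem fPow_half_pos {a : ℝ} (ha : -(1 / 2) < a) : 0 < fPow a (1 / 2) := by
  rw [fPow_half]
  exact one_div_pos.mpr (by linarith)

theorem two_mul_fPow_half_sub_fPow {a x : ℝ} (ha : 2 * a + 1 ≠ 0) (hax : a + x ≠ 0) :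
    2 * fPow a (1 / 2) - fPow a x =
      (a * ((1 - x) ^ 2 + x ^ 2) + x ^ 2) / ((2 * a + 1) * (a + x)) := by
  rw [fPow_half, fPow, show 4 * a + 2 = 2 * (2 * a + 1) by ring]
  field_simp
  ring

theorem fPow_le_two_mul_fPow_half {a x : ℝ} (ha : 0 ≤ a) (hax : 0 < a + x) :
    fPow a x ≤ 2 * fPow a (1 / 2) := by
  rw [← sub_nonneg, two_mul_fPow_half_sub_fPow (by positivity) hax.ne']
  positivity

theorem fPow_sq_self {t : ℝ} (ht : t ≠ 0) : fPow (t ^ 2) t = (1 - t) / (1 + t) := by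
  rw [fPow, show t ^ 2 + t = t * (1 + t) by ring, mul_div_mul_left _ _ ht]

theorem tendsto_fPow_sq_self_div_fPow_sq_half :
    Tendsto (fun t : ℝ ↦ fPow (t ^ 2) t / fPow (t ^ 2) (1 / 2)) (𝓝[≠] 0) (𝓝 2) := by
  have ratio_eq : (fun t : ℝ ↦ (1 - t) / (1 + t) * (4 * t ^ 2 + 2)) =ᶠ[𝓝[≠] 0]
      fun t ↦ fPow (t ^ 2) t / fPow (t ^ 2) (1 / 2) := by
    filter_upwards [self_mem_nhdsWithin] with t ht
    rw [fPow_sq_self ht, fPow_half, one_div, div_inv_eq_mul]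
  have ratio_continuousAt :
      ContinuousAt (fun t : ℝ ↦ (1 - t) / (1 + t) * (4 * t ^ 2 + 2)) 0 := by
    fun_prop (disch := norm_num)
  refine Tendsto.congr' ratio_eq (tendsto_nhdsWithin_of_tendsto_nhds ?_)
  simpa using ratio_continuousAt.tendsto

/-- `sup_{x∈[0,1]} f_a(x) ≤ 2 f_a(1/2)` for every `a > 0`, and the constant `2`
is sharp, approached as `a → 0`. -/
theorem transmissivity_half_loss_factor :
    (∀ a : ℝ, 0 < a → ∀ x ∈ Set.Icc (0 : ℝ) 1, fPow a x ≤ 2 * fPow a (1 / 2)) ∧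
      (∀ ε : ℝ, 0 < ε → ∃ a : ℝ, 0 < a ∧ a < ε ∧
        ∃ x ∈ Set.Icc (0 : ℝ) 1, (2 - ε) * fPow a (1 / 2) < fPow a x) := by
  refine ⟨fun a ha x hx ↦ fPow_le_two_mul_fPow_half ha.le (add_pos_of_pos_of_nonneg ha hx.1),
    fun ε hε ↦ ?_⟩
  have ratio_gt : ∀ᶠ t : ℝ in 𝓝[>] 0, 2 - ε < fPow (t ^ 2) t / fPow (t ^ 2) (1 / 2) :=
    (tendsto_fPow_sq_self_div_fPow_sq_half.mono_left (nhdsGT_le_nhdsNE 0)).eventually_const_lt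
      (sub_lt_self 2 hε)
  have sq_lt : ∀ᶠ t : ℝ in 𝓝[>] 0, t ^ 2 < ε :=
    (continuous_pow 2).continuousWithinAt.eventually_lt_const (by simpa using hε)
  obtain ⟨t, ht_ratio, ht_sq, ht_pos, ht_le⟩ :=
    (ratio_gt.and (sq_lt.and (Ioc_mem_nhdsGT one_pos))).exists
  have denom_pos : 0 < fPow (t ^ 2) (1 / 2) := fPow_half_pos (by linarith [sq_nonneg t])
  exact ⟨t ^ 2, by positivity, ht_sq, t, ⟨ht_pos.le, ht_le⟩, (lt_div_iff₀ denom_pos).mp ht_ratio⟩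
end

section
/- For every a > 0, sup_{x ∈ [0,1]} f_a(x) ≤ (4/3)·max(f_a(1/4), f_a(1/2)), where f_a(x) = x(1−x)/(a+x). Moreover the constant 4/3 is sharp as a → 0. -/
/-!
The upper bound needs only the value at `1 / 4`: for `1 / 4 ≤ y < 1`, the inequality
`x (1 - x) ≤ 1 / 4 ≤ y` bounds every value of `f_a` by `y / (a + y) = f_a(y) / (1 - y)`, and
`y = 1 / 4` gives the factor `4 / 3`.
For sharpness, `f_a(x) → 1 - x` as `a → 0` for fixed `x ≠ 0`, so the maximum of the two values
tends to `3 / 4`, whereas `f_a(√a) → 1`; here `√a` is the leading order of the maximizer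
`√(a² + a) - a` of `f_a`.
-/

open Filter Topology

theorem fPow_le_div_add {a x y : ℝ} (ha : 0 ≤ a) (hax : 0 < a + x) (hy : 1 / 4 ≤ y) :
    fPow a x ≤ y / (a + y) := by
  have hxy : x * (1 - x) ≤ y := by linarith [sq_nonneg (x - 1 / 2)]
  have hy_nonneg : 0 ≤ y := by linarith
  rw [fPow, div_le_div_iff₀ hax (by linarith)]
  calc x * (1 - x) * (a + y) = a * (x * (1 - x)) + x * y - x ^ 2 * y := by ring
    _ ≤ a * (x * (1 - x)) + x * y := sub_le_self _ (mul_nonneg (sq_nonneg x) hy_nonneg)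
    _ ≤ a * y + x * y := by gcongr
    _ = y * (a + x) := by ring

theorem one_sub_mul_fPow_le_fPow {a x y : ℝ} (ha : 0 ≤ a) (hax : 0 < a + x)
    (hy : y ∈ Set.Icc (1 / 4) 1) : (1 - y) * fPow a x ≤ fPow a y :=
  calc (1 - y) * fPow a x ≤ (1 - y) * (y / (a + y)) :=
        mul_le_mul_of_nonneg_left (fPow_le_div_add ha hax hy.1) (sub_nonneg.2 hy.2)
    _ = fPow a y := by rw [fPow]; ring

theorem tendsto_fPow_nhds_zero {x : ℝ} (hx : x ≠ 0) :
    Tendsto (fun a ↦ fPow a x) (𝓝 0) (𝓝 (1 - x)) := by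
  have hcont : ContinuousAt (fun a ↦ fPow a x) 0 := by
    unfold fPow
    exact continuousAt_const.div (by fun_prop) (by simpa using hx)
  have hzero : fPow 0 x = 1 - x := by rw [fPow, zero_add, mul_div_cancel_left₀ _ hx]
  exact hzero ▸ hcont.tendsto

theorem tendsto_max_fPow_quarter_half :
    Tendsto (fun a ↦ max (fPow a (1 / 4)) (fPow a (1 / 2))) (𝓝 0) (𝓝 (3 / 4)) := by
  have hlim := (tendsto_fPow_nhds_zero (x := 1 / 4) (by norm_num)).max
    (tendsto_fPow_nhds_zero (x := 1 / 2) (by norm_num))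
  convert hlim using 2
  norm_num

theorem fPow_sqrt {a : ℝ} (ha : 0 < a) : fPow a √a = (1 - √a) / (1 + √a) := by
  have hden : a + √a = √a * (1 + √a) := by rw [mul_add, mul_one, Real.mul_self_sqrt ha.le, add_comm]
  rw [fPow, hden, mul_div_mul_left _ _ (Real.sqrt_pos.2 ha).ne']

theorem tendsto_fPow_sqrt : Tendsto (fun a ↦ fPow a √a) (𝓝[>] 0) (𝓝 1) := by
  have hcont : ContinuousAt (fun a ↦ (1 - √a) / (1 + √a)) 0 :=
    ContinuousAt.div (by fun_prop) (by fun_prop) (by simp)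
  have hlim : Tendsto (fun a ↦ (1 - √a) / (1 + √a)) (𝓝[>] 0) (𝓝 1) := by
    simpa using hcont.tendsto.mono_left nhdsWithin_le_nhds
  refine hlim.congr' ?_
  filter_upwards [self_mem_nhdsWithin] with a ha using (fPow_sqrt ha).symm

theorem eventually_mul_max_fPow_lt_fPow_sqrt {c : ℝ} (hc : c < 4 / 3) :
    ∀ᶠ a in 𝓝[>] 0, c * max (fPow a (1 / 4)) (fPow a (1 / 2)) < fPow a √a :=
  ((tendsto_max_fPow_quarter_half.mono_left nhdsWithin_le_nhds).const_mul c).eventually_lt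
    tendsto_fPow_sqrt (by linarith)

/-- `sup_{x∈[0,1]} f_a(x) ≤ (4/3) max(f_a(1/4), f_a(1/2))` for every `a > 0`, and the
constant `4/3` is sharp as `a → 0`. -/
theorem transmissivity_quarter_half_loss_factor :
    (∀ a : ℝ, 0 < a → ∀ x ∈ Set.Icc (0 : ℝ) 1,
        fPow a x ≤ (4 / 3) * max (fPow a (1 / 4)) (fPow a (1 / 2))) ∧
      (∀ ε : ℝ, 0 < ε → ∃ a : ℝ, 0 < a ∧ a < ε ∧
        ∃ x ∈ Set.Icc (0 : ℝ) 1,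
          (4 / 3 - ε) * max (fPow a (1 / 4)) (fPow a (1 / 2)) < fPow a x) := by
  constructor
  · intro a ha x hx
    have hquarter : (1 - 1 / 4) * fPow a x ≤ fPow a (1 / 4) :=
      one_sub_mul_fPow_le_fPow ha.le (add_pos_of_pos_of_nonneg ha hx.1) (by norm_num)
    linarith [le_max_left (fPow a (1 / 4)) (fPow a (1 / 2))]
  · intro ε hε
    have hsmall : ∀ᶠ a : ℝ in 𝓝[>] 0, a ∈ Set.Ioo 0 (min ε 1) :=
      Ioo_mem_nhdsGT (lt_min hε one_pos)
    obtain ⟨a, ⟨ha_pos, ha_lt⟩, hsharp⟩ :=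
      (hsmall.and (eventually_mul_max_fPow_lt_fPow_sqrt (sub_lt_self (4 / 3) hε))).exists
    obtain ⟨haε, ha_one⟩ := lt_min_iff.1 ha_lt
    exact ⟨a, ha_pos, haε, √a, ⟨Real.sqrt_nonneg a, Real.sqrt_le_one.2 ha_one.le⟩, hsharp⟩
end

section
/- For every a > 0, sup_{x ∈ [0,1]} f_a(x) ≤ (8/7)·max(f_a(1/8), f_a(1/4), f_a(1/2)), where f_a(x) = x(1−x)/(a+x). Moreover the constant 8/7 is sharp as a → 0. -/
/-!
For `a + x > 0` the bound `f_a(x) ≤ m` says that the quadratic `x² - (1 - m) x + a m` is nonnegative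
at `x`, so it follows from the discriminant condition `(1 - m)² ≤ 4 a m`. With `m = (8/7) f_a(p)`
this condition holds for `0 ≤ a ≤ 1/8` when `p = 1/8`, for `1/8 ≤ a ≤ 1/2` when `p = 1/4`, and for
`1/2 ≤ a` when `p = 1/2`.

As `a → 0⁺`, the value at a fixed `p ≠ 0` tends to `1 - p`, so the three-point maximum tends to
`7/8`, while `f_a(√a) = (1 - √a) / (1 + √a)` tends to `1`.
-/

open Filter Topology

section UpperBound

variable {a x : ℝ}

theorem fPow_le_of_sq_one_sub_le {m : ℝ} (hax : 0 < a + x) (hm : (1 - m) ^ 2 ≤ 4 * a * m) :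
    fPow a x ≤ m := by
  rw [fPow, div_le_iff₀ hax]
  linarith [sq_nonneg (2 * x - (1 - m))]

theorem fPow_le_mul_fPow_of_sq_sub_le {c p : ℝ} (hax : 0 < a + x) (hap : 0 < a + p)
    (h : (a + p - c * (p * (1 - p))) ^ 2 ≤ 4 * a * (c * (p * (1 - p))) * (a + p)) :
    fPow a x ≤ c * fPow a p := by
  refine fPow_le_of_sq_one_sub_le hax ?_
  have hleft : (1 - c * fPow a p) ^ 2 = (a + p - c * (p * (1 - p))) ^ 2 / (a + p) ^ 2 := by
    rw [fPow]
    field_simp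
  have hright : 4 * a * (c * fPow a p) =
      4 * a * (c * (p * (1 - p))) * (a + p) / (a + p) ^ 2 := by
    rw [fPow]
    field_simp
  rw [hleft, hright]
  gcongr

theorem fPow_le_mul_fPow_eighth (hax : 0 < a + x) (ha₀ : 0 ≤ a) (ha : a ≤ 1 / 8) :
    fPow a x ≤ 8 / 7 * fPow a (1 / 8) :=
  fPow_le_mul_fPow_of_sq_sub_le hax (by linarith) <| by
    linarith [mul_nonneg ha₀ (sub_nonneg.mpr ha)]

theorem fPow_le_mul_fPow_quarter (hax : 0 < a + x) (ha₁ : 1 / 8 ≤ a) (ha₂ : a ≤ 1 / 2) :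
    fPow a x ≤ 8 / 7 * fPow a (1 / 4) :=
  fPow_le_mul_fPow_of_sq_sub_le hax (by linarith) <| by
    linarith [mul_nonneg (sub_nonneg.mpr ha₁) (sub_nonneg.mpr ha₂)]

theorem fPow_le_mul_fPow_half (hax : 0 < a + x) (ha : 1 / 2 ≤ a) :
    fPow a x ≤ 8 / 7 * fPow a (1 / 2) :=
  fPow_le_mul_fPow_of_sq_sub_le hax (by linarith) <| by
    linarith [mul_self_le_mul_self (by norm_num) ha]

theorem fPow_le_mul_max_eighth_quarter_half (ha : 0 ≤ a) (hax : 0 < a + x) :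
    fPow a x ≤ 8 / 7 * max (fPow a (1 / 8)) (max (fPow a (1 / 4)) (fPow a (1 / 2))) := by
  simp only [mul_max_of_nonneg _ _ (by norm_num : (0 : ℝ) ≤ 8 / 7), le_max_iff]
  rcases le_total a (1 / 8) with h₁ | h₁
  · exact .inl (fPow_le_mul_fPow_eighth hax ha h₁)
  rcases le_total a (1 / 2) with h₂ | h₂
  · exact .inr (.inl (fPow_le_mul_fPow_quarter hax h₁ h₂))
  · exact .inr (.inr (fPow_le_mul_fPow_half hax h₂))

end UpperBound

section Sharpness

theorem tendsto_fPow_left_zero {p : ℝ} (hp : p ≠ 0) :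
    Tendsto (fun a ↦ fPow a p) (𝓝 0) (𝓝 (1 - p)) := by
  have hcont : ContinuousAt (fun a ↦ fPow a p) 0 := by
    unfold fPow
    exact continuousAt_const.div (by fun_prop) (by simpa using hp)
  have hzero : fPow 0 p = 1 - p := by
    rw [fPow, zero_add, mul_div_cancel_left₀ _ hp]
  simpa only [hzero] using hcont.tendsto

theorem tendsto_max_fPow_eighth_quarter_half :
    Tendsto (fun a ↦ max (fPow a (1 / 8)) (max (fPow a (1 / 4)) (fPow a (1 / 2))))
      (𝓝 0) (𝓝 (7 / 8)) := by
  convert (tendsto_fPow_left_zero (p := 1 / 8) (by norm_num)).max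
    ((tendsto_fPow_left_zero (p := 1 / 4) (by norm_num)).max
      (tendsto_fPow_left_zero (p := 1 / 2) (by norm_num))) using 2
  norm_num

theorem eventually_mul_max_lt_fPow_sqrt {c : ℝ} (hc : c < 8 / 7) :
    ∀ᶠ a in 𝓝[>] 0,
      c * max (fPow a (1 / 8)) (max (fPow a (1 / 4)) (fPow a (1 / 2))) < fPow a √a :=
  ((tendsto_max_fPow_eighth_quarter_half.mono_left nhdsWithin_le_nhds).const_mul c).eventually_lt
    tendsto_fPow_sqrt (by linarith)

end Sharpness

/-- `sup_{x∈[0,1]} f_a(x) ≤ (8/7) max(f_a(1/8), f_a(1/4), f_a(1/2))` for every `a > 0`,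
and the constant `8/7` is sharp as `a → 0`. -/
theorem transmissivity_eighth_quarter_half_loss_factor :
    (∀ a : ℝ, 0 < a → ∀ x ∈ Set.Icc (0 : ℝ) 1,
        fPow a x ≤ (8 / 7) * max (fPow a (1 / 8)) (max (fPow a (1 / 4)) (fPow a (1 / 2)))) ∧
      (∀ ε : ℝ, 0 < ε → ∃ a : ℝ, 0 < a ∧ a < ε ∧
        ∃ x ∈ Set.Icc (0 : ℝ) 1,
          (8 / 7 - ε) * max (fPow a (1 / 8)) (max (fPow a (1 / 4)) (fPow a (1 / 2)))
            < fPow a x) := by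
  refine ⟨fun a ha x hx ↦ fPow_le_mul_max_eighth_quarter_half ha.le (by linarith [hx.1]),
    fun ε hε ↦ ?_⟩
  have hsmall : ∀ᶠ a in 𝓝[>] (0 : ℝ), a ∈ Set.Ioo 0 (min ε 1) :=
    Ioo_mem_nhdsGT (lt_min hε one_pos)
  obtain ⟨a, hlt, ha₀, ha⟩ :=
    ((eventually_mul_max_lt_fPow_sqrt (c := 8 / 7 - ε) (by linarith)).and hsmall).exists
  obtain ⟨haε, ha₁⟩ := lt_min_iff.mp ha
  exact ⟨a, ha₀, haε, √a, ⟨Real.sqrt_nonneg a, Real.sqrt_le_one.mpr ha₁.le⟩, hlt⟩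
end

section
/- Let n ≥ 1, t, W, J, θ > 0, let d = (θ/n)·(1,…,1) ∈ ℝ^n, and let a ∈ [0,1]^n with transmissivity ρ = ρ(a). Then the LMMSE satisfies m(n,t,W,J,d,a) ≥ θ/(1 + θtρ/(n(W + Jρ))). In particular, for any mask (a ∈ [0,1]^n), if the exposure time satisfies t = o(n) then the LMMSE stays bounded below by θ(1 − o(1)), so an exposure time of order Ω(n) is necessary for nontrivial reconstruction of an i.i.d. scene. -/
/-!
By the harmonic–arithmetic mean inequality the LMMSE is at least `n² / ∑ᵢ (1/dᵢ + γ|âᵢ|²)`, and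
Plancherel evaluates this sum as `∑ᵢ 1/dᵢ + γ n ∑ᵢ aᵢ²`. A mask with values in `[0,1]` has
`∑ᵢ aᵢ² ≤ ∑ᵢ aᵢ = nρ`, which gives the lower bound. Since `ρ / (W + Jρ)` is largest at `ρ = 1`, the
bound is at least `θ(1 - θt / (n(W + J)))` whatever the mask.
-/

open scoped ZMod ComplexConjugate InnerProductSpace

section Plancherel

variable {N : ℕ} [NeZero N] {E : Type*} [NormedAddCommGroup E] [InnerProductSpace ℂ E]

lemma sum_inner_zmod_dft_left (Φ Ψ : ZMod N → E) :
    ∑ k, ⟪𝓕 Φ k, Ψ k⟫_ℂ = ∑ j, ⟪Φ j, 𝓕 Ψ (-j)⟫_ℂ := by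
  have conj_stdAddChar (x : ZMod N) : conj (ZMod.stdAddChar (-x)) = ZMod.stdAddChar x := by
    rw [← AddChar.map_neg_eq_conj, neg_neg]
  simp only [ZMod.dft_apply, sum_inner, inner_sum, inner_smul_left, inner_smul_right,
    conj_stdAddChar]
  rw [Finset.sum_comm]
  simp only [mul_neg, neg_neg, mul_comm]

theorem sum_inner_zmod_dft_zmod_dft (Φ Ψ : ZMod N → E) :
    ∑ k, ⟪𝓕 Φ k, 𝓕 Ψ k⟫_ℂ = N * ∑ j, ⟪Φ j, Ψ j⟫_ℂ := by
  simp only [sum_inner_zmod_dft_left, ZMod.dft_dft, neg_neg, inner_smul_right, Finset.mul_sum]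

theorem sum_sq_norm_zmod_dft (Φ : ZMod N → E) :
    ∑ k, ‖𝓕 Φ k‖ ^ 2 = N * ∑ j, ‖Φ j‖ ^ 2 := by
  have h := sum_inner_zmod_dft_zmod_dft Φ Φ
  simp only [inner_self_eq_norm_sq_to_K, Complex.coe_algebraMap] at h
  exact_mod_cast h

end Plancherel

lemma one_sub_le_one_div_one_add {K : Type*} [Field K] [LinearOrder K] [IsStrictOrderedRing K]
    {x : K} (hx : -1 < x) : 1 - x ≤ 1 / (1 + x) := by
  rw [le_div_iff₀ (by linarith)]
  linarith [sq_nonneg x]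

section Aperture

variable {n : ℕ} {a : Fin n → ℝ}

lemma zmod_finEquiv_eq_natCast [NeZero n] (i : Fin n) : ZMod.finEquiv n i = ((i : ℕ) : ZMod n) := by
  obtain ⟨m, rfl⟩ := Nat.exists_eq_succ_of_ne_zero (NeZero.ne n)
  exact (Fin.cast_val_eq_self i).symm

lemma dft_eq_zmod_dft [NeZero n] (a : Fin n → ℝ) (j : Fin n) :
    dft a j = 𝓕 (fun i ↦ (a ((ZMod.finEquiv n).symm i) : ℂ)) (ZMod.finEquiv n j) := by
  rw [dft, ZMod.dft_apply, ← (ZMod.finEquiv n).toEquiv.sum_comp]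
  refine Finset.sum_congr rfl fun i _ ↦ ?_
  have kernel_eq : ZMod.stdAddChar (-(ZMod.finEquiv n i * ZMod.finEquiv n j)) =
      Complex.exp (-(2 * Real.pi * Complex.I * (i : ℕ) * (j : ℕ)) / n) := by
    have h := ZMod.stdAddChar_coe (N := n) (-((i : ℕ) * (j : ℕ)))
    push_cast at h
    rw [zmod_finEquiv_eq_natCast, zmod_finEquiv_eq_natCast, h]
    ring_nf
  simp only [RingEquiv.toEquiv_eq_coe, EquivLike.coe_coe, RingEquiv.symm_apply_apply, kernel_eq,
    smul_eq_mul]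
  exact mul_comm ..

theorem sum_sq_norm_dft (a : Fin n → ℝ) : ∑ j, ‖dft a j‖ ^ 2 = n * ∑ i, a i ^ 2 := by
  rcases eq_zero_or_neZero n with rfl | _
  · simp
  calc ∑ j, ‖dft a j‖ ^ 2
      = ∑ k, ‖𝓕 (fun i ↦ (a ((ZMod.finEquiv n).symm i) : ℂ)) k‖ ^ 2 := by
        simp only [dft_eq_zmod_dft]
        exact (ZMod.finEquiv n).toEquiv.sum_comp fun k ↦
          ‖𝓕 (fun i ↦ (a ((ZMod.finEquiv n).symm i) : ℂ)) k‖ ^ 2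
    _ = n * ∑ x, a ((ZMod.finEquiv n).symm x) ^ 2 := by
        simp only [sum_sq_norm_zmod_dft, Complex.norm_real, Real.norm_eq_abs, sq_abs]
    _ = n * ∑ i, a i ^ 2 := by
        rw [← (ZMod.finEquiv n).symm.toEquiv.sum_comp fun i ↦ a i ^ 2]
        rfl

lemma card_mul_transmissivity (a : Fin n → ℝ) : n * transmissivity a = ∑ i, a i := by
  rcases eq_zero_or_neZero n with rfl | _
  · simp
  · rw [transmissivity, ← mul_assoc, mul_one_div_cancel (NeZero.ne _), one_mul]

lemma transmissivity_mem_Icc (ha : ∀ i, a i ∈ Set.Icc (0 : ℝ) 1) :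
    transmissivity a ∈ Set.Icc (0 : ℝ) 1 := by
  have sum_nonneg : 0 ≤ ∑ i, a i := Finset.sum_nonneg fun i _ ↦ (ha i).1
  have sum_le : ∑ i, a i ≤ n := by
    simpa using Finset.sum_le_sum fun i (_ : i ∈ Finset.univ) ↦ (ha i).2
  rw [transmissivity, one_div_mul_eq_div]
  exact ⟨by positivity, div_le_one_of_le₀ sum_le n.cast_nonneg⟩

lemma sum_sq_le_card_mul_transmissivity (ha : ∀ i, a i ∈ Set.Icc (0 : ℝ) 1) :
    ∑ i, a i ^ 2 ≤ n * transmissivity a := by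
  rw [card_mul_transmissivity]
  exact Finset.sum_le_sum fun i _ ↦ pow_le_of_le_one (ha i).1 (ha i).2 two_ne_zero

end Aperture

section LowerBound

variable {n : ℕ} {t W J θ : ℝ} {a : Fin n → ℝ}

theorem sq_div_le_lmmse {d : Fin n → ℝ} (ht : 0 ≤ t) (hden : 0 ≤ W + J * transmissivity a)
    (hd : ∀ i, 0 < d i) :
    n ^ 2 / (∑ i, 1 / d i + t / (W + J * transmissivity a) * ∑ i, a i ^ 2) ≤
      lmmse n t W J d a := by
  rcases eq_zero_or_neZero n with rfl | _
  · simp [lmmse]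
  have hn : (n : ℝ) ≠ 0 := NeZero.ne _
  set γ := t / (n * (W + J * transmissivity a)) with hγ
  have sum_eq : ∑ i, (1 / d i + γ * ‖dft a i‖ ^ 2) =
      ∑ i, 1 / d i + t / (W + J * transmissivity a) * ∑ i, a i ^ 2 := by
    rw [Finset.sum_add_distrib, ← Finset.mul_sum, sum_sq_norm_dft, ← mul_assoc, hγ,
      div_mul_eq_mul_div, mul_comm t, mul_div_mul_left _ _ hn]
  have summand_pos (i : Fin n) : 0 < 1 / d i + γ * ‖dft a i‖ ^ 2 := by
    have := hd i
    positivity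
  -- With all numerators equal to `1` this is the harmonic–arithmetic mean inequality.
  have harm_mean_le := Finset.sq_sum_div_le_sum_sq_div Finset.univ (fun _ ↦ (1 : ℝ))
    fun i _ ↦ summand_pos i
  simpa only [lmmse, ← hγ, sum_eq, one_pow, Finset.sum_const, Finset.card_univ, Fintype.card_fin,
    nsmul_eq_mul, mul_one] using harm_mean_le

theorem div_le_lmmse_const (hn : n ≠ 0) (ht : 0 ≤ t) (hW : 0 < W) (hJ : 0 ≤ J) (hθ : 0 < θ)
    (ha : ∀ i, a i ∈ Set.Icc (0 : ℝ) 1) :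
    θ / (1 + θ * t * transmissivity a / (n * (W + J * transmissivity a))) ≤
      lmmse n t W J (fun _ ↦ θ / n) a := by
  have hρ := (transmissivity_mem_Icc ha).1
  have sum_sq_le := sum_sq_le_card_mul_transmissivity ha
  have lmmse_ge := sq_div_le_lmmse (n := n) (d := fun _ ↦ θ / n) ht
    (by positivity : 0 ≤ W + J * transmissivity a) fun _ ↦ by positivity
  set ρ := transmissivity a
  calc θ / (1 + θ * t * ρ / (n * (W + J * ρ)))
      = n ^ 2 / (n * (1 / (θ / n)) + t / (W + J * ρ) * (n * ρ)) := by field_simp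
    _ ≤ n ^ 2 / (n * (1 / (θ / n)) + t / (W + J * ρ) * ∑ i, a i ^ 2) := by gcongr
    _ ≤ lmmse n t W J (fun _ ↦ θ / n) a := by simpa using lmmse_ge

theorem mul_one_sub_le_lmmse_const (hn : n ≠ 0) (ht : 0 ≤ t) (hW : 0 < W) (hJ : 0 ≤ J)
    (hθ : 0 < θ) (ha : ∀ i, a i ∈ Set.Icc (0 : ℝ) 1) :
    θ * (1 - θ * t / (n * (W + J))) ≤ lmmse n t W J (fun _ ↦ θ / n) a := by
  obtain ⟨hρ_nonneg, hρ_le_one⟩ := transmissivity_mem_Icc ha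
  have lmmse_ge := div_le_lmmse_const hn ht hW hJ hθ ha
  set ρ := transmissivity a
  have ratio_le : ρ / (W + J * ρ) ≤ 1 / (W + J) := by
    rw [div_le_div_iff₀ (by positivity) (by positivity)]
    linarith [mul_le_of_le_one_left hW.le hρ_le_one]
  have snr_le : θ * t * ρ / (n * (W + J * ρ)) ≤ θ * t / (n * (W + J)) := by
    calc θ * t * ρ / (n * (W + J * ρ)) = θ * t / n * (ρ / (W + J * ρ)) :=
          mul_div_mul_comm ..
      _ ≤ θ * t / n * (1 / (W + J)) := by gcongr
      _ = θ * t / (n * (W + J)) := by rw [div_mul_div_comm, mul_one]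
  have snr_nonneg : 0 ≤ θ * t * ρ / (n * (W + J * ρ)) := by positivity
  calc θ * (1 - θ * t / (n * (W + J)))
      ≤ θ * (1 - θ * t * ρ / (n * (W + J * ρ))) := by gcongr
    _ ≤ θ * (1 / (1 + θ * t * ρ / (n * (W + J * ρ)))) := by
        gcongr
        exact one_sub_le_one_div_one_add (by linarith)
    _ ≤ lmmse n t W J (fun _ ↦ θ / n) a := by rwa [mul_one_div]

end LowerBound

/-- For an i.i.d. scene prior `d = (θ/n)·𝟙` and any mask `a ∈ [0,1]^n`,
`m(n,t,W,J,d,a) ≥ θ/(1 + θtρ/(n(W+Jρ)))`.  In particular, for every `ε > 0` there is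
`c > 0` such that whenever the exposure time satisfies `t ≤ cn`, the LMMSE of any mask
stays above `θ(1-ε)`: exposure time `Ω(n)` is necessary for nontrivial reconstruction. -/
theorem mask_needs_long_exposure (n : ℕ) (hn : 1 ≤ n) (t W J θ : ℝ)
    (ht : 0 < t) (hW : 0 < W) (hJ : 0 < J) (hθ : 0 < θ)
    (a : Fin n → ℝ) (ha : ∀ i, a i ∈ Set.Icc (0 : ℝ) 1)
    (ρ : ℝ) (hρ : ρ = transmissivity a) :
    θ / (1 + θ * t * ρ / (n * (W + J * ρ))) ≤ lmmse n t W J (fun _ => θ / n) a ∧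
      ∀ ε : ℝ, 0 < ε → ∃ c : ℝ, 0 < c ∧
        ∀ (n' : ℕ) (t' : ℝ) (a' : Fin n' → ℝ), 1 ≤ n' → 0 < t' → t' ≤ c * n' →
          (∀ i, a' i ∈ Set.Icc (0 : ℝ) 1) →
          θ * (1 - ε) ≤ lmmse n' t' W J (fun _ => θ / n') a' := by
  subst hρ
  refine ⟨div_le_lmmse_const (Nat.one_le_iff_ne_zero.mp hn) ht.le hW hJ.le hθ ha, fun ε hε ↦
    ⟨ε * (W + J) / θ, by positivity, fun n' t' a' hn' ht' ht'_le ha' ↦ ?_⟩⟩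
  have snr_le : θ * t' / (n' * (W + J)) ≤ ε := by
    rw [div_le_iff₀ (by positivity)]
    calc θ * t' ≤ θ * (ε * (W + J) / θ * n') := by gcongr
      _ = ε * (n' * (W + J)) := by field_simp
  calc θ * (1 - ε) ≤ θ * (1 - θ * t' / (n' * (W + J))) := by gcongr
    _ ≤ lmmse n' t' W J (fun _ ↦ θ / n') a' :=
        mul_one_sub_le_lmmse_const (Nat.one_le_iff_ne_zero.mp hn') ht'.le hW hJ.le hθ ha'
end
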